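/- Let p̄ = (p(1), p(2), …) satisfy 0 ≤ p(i) < 1 and ∏_{i=1}^∞ (1 − p(i)) > 0, and let {ψ_α}_{α∈A} be a finite set of first-order sentences of the language L_≤. Then there exist a subset A′ ⊆ A, a constant ε > 0, and a natural number N such that for all n > N the probability that G(n,p̄) satisfies ψ_α for every α ∈ A′ and satisfies ¬ψ_α for every α ∈ A \ A′ is larger than ε. -/

import Mathlib

open FirstOrder Filter

namespace RandomGraph

/-- The set of potential edges of a graph on `Fin n` (pairs `(v,w)` with `v < w`).
Vertex `v : Fin n` represents the number `v + 1` of the interval `[n] = {1, …, n}`. -/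
abbrev EdgeIdx (n : ℕ) := {e : Fin n × Fin n // e.1 < e.2}

/-- An outcome of the random graph on `[n]`: a choice of which potential edges are present. -/
abbrev Sample (n : ℕ) := EdgeIdx n → Bool

/-- Adjacency of two vertices (described by their values in `Fin n`) in the outcome `ω`. -/
def adjVal {n : ℕ} (ω : Sample n) (a b : ℕ) : Prop :=
  ∃ e : EdgeIdx n, ω e = true ∧
    ((e.1.1.val = a ∧ e.1.2.val = b) ∨ (e.1.1.val = b ∧ e.1.2.val = a))

/-- Adjacency of two vertices in the outcome `ω`. -/
def sampleAdj {n : ℕ} (ω : Sample n) (v w : Fin n) : Prop := adjVal ω v.val w.val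

/-- The probability of the outcome `ω` in the model `G(n, p̄)`: each pair of distinct
vertices at distance `d` is an edge with probability `p d`, independently.  (The value `p 0` is
never used, since distinct vertices are at distance at least 1.) -/
noncomputable def sampleWeight (p : ℕ → ℝ) {n : ℕ} (ω : Sample n) : ℝ :=
  ∏ e : EdgeIdx n,
    (if ω e then p (e.1.2.val - e.1.1.val) else 1 - p (e.1.2.val - e.1.1.val))

/-- The probability of the outcome `ω` in the circular model `C(n, p̄)`: vertices `v, w` are
adjacent with probability `p (min |v-w| (n - |v-w|))`, independently. -/
noncomputable def cWeight (p : ℕ → ℝ) {n : ℕ} (ω : Sample n) : ℝ :=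
  ∏ e : EdgeIdx n,
    (if ω e then p (min (e.1.2.val - e.1.1.val) (n - (e.1.2.val - e.1.1.val)))
      else 1 - p (min (e.1.2.val - e.1.1.val) (n - (e.1.2.val - e.1.1.val))))

open scoped Classical in
/-- The probability of the event `P` in the random graph `G(n, p̄)`. -/
noncomputable def Pr (p : ℕ → ℝ) (n : ℕ) (P : Sample n → Prop) : ℝ :=
  ∑ ω : Sample n, if P ω then sampleWeight p ω else 0

open scoped Classical in
/-- The probability of the event `P` in the circular random graph `C(n, p̄)`. -/
noncomputable def cPr (p : ℕ → ℝ) (n : ℕ) (P : Sample n → Prop) : ℝ :=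
  ∑ ω : Sample n, if P ω then cWeight p ω else 0

/-! ### The language `L` of graphs (also used as the language `L^c`) -/

/-- An outcome `ω` of the random graph, viewed as a structure of `FirstOrder.Language.graph`,
the language with a single binary adjacency predicate. -/
def graphStructure {n : ℕ} (ω : Sample n) : Language.graph.Structure (Fin n) where
  RelMap | .adj => fun x => sampleAdj ω (x 0) (x 1)

/-- Satisfaction of a sentence of the language `L` in the outcome `ω`. -/
def SatL {n : ℕ} (ω : Sample n) (ψ : Language.graph.Sentence) : Prop :=
  @Language.Sentence.Realize _ _ (graphStructure ω) ψ

/-- `Prob(n, p̄; ψ)` for a sentence `ψ` of the language `L`. -/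
noncomputable def ProbL (p : ℕ → ℝ) (n : ℕ) (ψ : Language.graph.Sentence) : ℝ :=
  Pr p n fun ω => SatL ω ψ

/-- The probability that `C(n, p̄)` satisfies a sentence `ψ` of the language `L^c = L`. -/
noncomputable def cProbL (p : ℕ → ℝ) (n : ℕ) (ψ : Language.graph.Sentence) : ℝ :=
  cPr p n fun ω => SatL ω ψ

/-! ### The language `L₊` -/

/-- The constants of the language `L₊`: the first element `1` and the last element `n`. -/
inductive plusFunc : ℕ → Type
  | one : plusFunc 0
  | last : plusFunc 0

/-- The relations of `L₊`: adjacency and successor. -/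
inductive plusRel : ℕ → Type
  | adj : plusRel 2
  | succ : plusRel 2

/-- The language `L₊` with adjacency, successor (`x = y + 1`), and constants `1` and `n`. -/
def Lplus : Language := ⟨plusFunc, plusRel⟩

/-- An outcome `ω` of the random graph on `[m+1]`, as an `L₊`-structure. -/
def plusStructure {m : ℕ} (ω : Sample (m + 1)) : Lplus.Structure (Fin (m + 1)) where
  funMap | .one => fun _ => 0 | .last => fun _ => Fin.last m
  RelMap
    | .adj => fun x => sampleAdj ω (x 0) (x 1)
    | .succ => fun x => (x 0).val = (x 1).val + 1

/-- `Prob(n, p̄; ψ)` for a sentence `ψ` of `L₊` (set to `0` in the irrelevant case `n = 0`,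
where the constants cannot be interpreted). -/
noncomputable def ProbPlus (p : ℕ → ℝ) : ℕ → Lplus.Sentence → ℝ
  | 0, _ => 0
  | (m + 1), ψ => Pr p (m + 1) fun ω => @Language.Sentence.Realize _ _ (plusStructure ω) ψ

/-! ### The language `L≤` -/

/-- The relations of `L≤`: adjacency and linear order. -/
inductive leRel : ℕ → Type
  | adj : leRel 2
  | le : leRel 2

/-- The language `L≤` with adjacency and a linear order. -/
def Lle : Language := ⟨fun _ => Empty, leRel⟩

/-- An outcome `ω` of the random graph on `[n]`, as an `L≤`-structure. -/
def leStructure {n : ℕ} (ω : Sample n) : Lle.Structure (Fin n) where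
  funMap := fun f _ => Empty.elim f
  RelMap
    | .adj => fun x => sampleAdj ω (x 0) (x 1)
    | .le => fun x => x 0 ≤ x 1

/-- Satisfaction of a sentence of `L≤` in the outcome `ω`. -/
def SatLe {n : ℕ} (ω : Sample n) (ψ : Lle.Sentence) : Prop :=
  @Language.Sentence.Realize _ _ (leStructure ω) ψ

/-- `Prob(n, p̄; ψ)` for a sentence `ψ` of `L≤`. -/
noncomputable def ProbLe (p : ℕ → ℝ) (n : ℕ) (ψ : Lle.Sentence) : ℝ :=
  Pr p n fun ω => SatLe ω ψ

/-! ### The circular languages `L₊^c` and `L≤^c` -/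

/-- The relations of `L₊^c`: adjacency and cyclic successor. -/
inductive plusCRel : ℕ → Type
  | adj : plusCRel 2
  | succ : plusCRel 2

/-- The language `L₊^c`, with adjacency and cyclic successor (`x = y + 1 (mod n)`). -/
def LplusC : Language := ⟨fun _ => Empty, plusCRel⟩

/-- An outcome `ω` of the circular random graph on `[n]`, as an `L₊^c`-structure. -/
def plusCStructure {n : ℕ} (ω : Sample n) : LplusC.Structure (Fin n) where
  funMap := fun f _ => Empty.elim f
  RelMap
    | .adj => fun x => sampleAdj ω (x 0) (x 1)
    | .succ => fun x => (x 0).val = ((x 1).val + 1) % n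

/-- The probability that `C(n, p̄)` satisfies a sentence `ψ` of the language `L₊^c`. -/
noncomputable def cProbPlus (p : ℕ → ℝ) (n : ℕ) (ψ : LplusC.Sentence) : ℝ :=
  cPr p n fun ω => @Language.Sentence.Realize _ _ (plusCStructure ω) ψ

/-- The relations of `L≤^c`: adjacency and the ternary clockwise-order predicate. -/
inductive cycRel : ℕ → Type
  | adj : cycRel 2
  | btw : cycRel 3

/-- The language `L≤^c`, with adjacency and the ternary clockwise-order predicate `C`. -/
def Lcyc : Language := ⟨fun _ => Empty, cycRel⟩

/-- `C(a, b, c)`: `a ≤ b ≤ c` holds after some cyclic permutation of `(a, b, c)`. -/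
def cyclicBtw {n : ℕ} (a b c : Fin n) : Prop :=
  (a ≤ b ∧ b ≤ c) ∨ (b ≤ c ∧ c ≤ a) ∨ (c ≤ a ∧ a ≤ b)

/-- An outcome `ω` of the circular random graph on `[n]`, as an `L≤^c`-structure. -/
def cycStructure {n : ℕ} (ω : Sample n) : Lcyc.Structure (Fin n) where
  funMap := fun f _ => Empty.elim f
  RelMap
    | .adj => fun x => sampleAdj ω (x 0) (x 1)
    | .btw => fun x => cyclicBtw (x 0) (x 1) (x 2)

/-- Satisfaction of a sentence of `L≤^c` in the outcome `ω`. -/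
def SatCyc {n : ℕ} (ω : Sample n) (ψ : Lcyc.Sentence) : Prop :=
  @Language.Sentence.Realize _ _ (cycStructure ω) ψ

/-- The probability that `C(n, p̄)` satisfies a sentence `ψ` of the language `L≤^c`. -/
noncomputable def cProbCyc (p : ℕ → ℝ) (n : ℕ) (ψ : Lcyc.Sentence) : ℝ :=
  cPr p n fun ω => SatCyc ω ψ


/-! ### Ordered graphs and Ehrenfeucht games -/

/-- An abstract ordered graph. -/
structure OG where
  V : Type
  le : V → V → Prop
  adj : V → V → Prop

/-- The pairs in `S` form a partial isomorphism. -/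
def Base (A B : OG) (S : Set (A.V × B.V)) : Prop :=
  ∀ s ∈ S, ∀ t ∈ S, (s.1 = t.1 ↔ s.2 = t.2) ∧ (A.le s.1 t.1 ↔ B.le s.2 t.2) ∧
    (A.adj s.1 t.1 ↔ B.adj s.2 t.2)

/-- Duplicator wins the `k`-round game from the position `S`. -/
def EF (A B : OG) : ℕ → Set (A.V × B.V) → Prop
  | 0, S => Base A B S
  | k + 1, S => Base A B S ∧ (∀ x, ∃ y, EF A B k (insert (x, y) S)) ∧
      (∀ y, ∃ x, EF A B k (insert (x, y) S))

theorem EF.base {A B : OG} {k : ℕ} {S : Set (A.V × B.V)} (h : EF A B k S) : Base A B S := by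
  cases k with
  | zero => exact h
  | succ k => exact h.1

theorem EF.anti {A B : OG} {k : ℕ} : ∀ {S S' : Set (A.V × B.V)}, EF A B k S → S' ⊆ S →
    EF A B k S' := by
  induction k with
  | zero => intro S S' h hs s hs1 t ht; exact h s (hs hs1) t (hs ht)
  | succ k ih =>
    rintro S S' ⟨h0, h1, h2⟩ hs
    refine ⟨fun s hs1 t ht => h0 s (hs hs1) t (hs ht), fun x => ?_, fun y => ?_⟩
    · obtain ⟨y, hy⟩ := h1 x
      exact ⟨y, ih hy (Set.insert_subset_insert hs)⟩
    · obtain ⟨x, hx⟩ := h2 y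
      exact ⟨x, ih hx (Set.insert_subset_insert hs)⟩

theorem EF.pred {A B : OG} {k : ℕ} : ∀ {S : Set (A.V × B.V)}, EF A B (k + 1) S → EF A B k S := by
  induction k with
  | zero => intro S h; exact h.1
  | succ k ih =>
    rintro S ⟨h0, h1, h2⟩
    refine ⟨h0, fun x => ?_, fun y => ?_⟩
    · obtain ⟨y, hy⟩ := h1 x
      exact ⟨y, ih hy⟩
    · obtain ⟨x, hx⟩ := h2 y
      exact ⟨x, ih hx⟩

theorem EF.symm {A B : OG} {k : ℕ} : ∀ {S : Set (A.V × B.V)} {U : Set (B.V × A.V)}, EF A B k S →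
    (∀ u ∈ U, (u.2, u.1) ∈ S) → EF B A k U := by
  induction k with
  | zero =>
    intro S U h hs s hs1 t ht
    obtain ⟨h1, h2, h3⟩ := h _ (hs s hs1) _ (hs t ht)
    exact ⟨h1.symm, h2.symm, h3.symm⟩
  | succ k ih =>
    rintro S U ⟨h0, h1, h2⟩ hs
    refine ⟨fun s hs1 t ht => ?_, fun x => ?_, fun y => ?_⟩
    · obtain ⟨h1, h2, h3⟩ := h0 _ (hs s hs1) _ (hs t ht)
      exact ⟨h1.symm, h2.symm, h3.symm⟩
    · obtain ⟨y, hy⟩ := h2 x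
      refine ⟨y, ih hy ?_⟩
      rintro u (rfl | hu)
      · exact Or.inl rfl
      · exact Or.inr (hs u hu)
    · obtain ⟨x, hx⟩ := h1 y
      refine ⟨x, ih hx ?_⟩
      rintro u (rfl | hu)
      · exact Or.inl rfl
      · exact Or.inr (hs u hu)

theorem EF.trans {A B C : OG} {k : ℕ} : ∀ {S : Set (A.V × B.V)} {T : Set (B.V × C.V)}
    {U : Set (A.V × C.V)}, EF A B k S → EF B C k T →
    (∀ u ∈ U, ∃ b, (u.1, b) ∈ S ∧ (b, u.2) ∈ T) → EF A C k U := by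
  have hb : ∀ {S : Set (A.V × B.V)} {T : Set (B.V × C.V)}
    {U : Set (A.V × C.V)}, Base A B S → Base B C T →
    (∀ u ∈ U, ∃ b, (u.1, b) ∈ S ∧ (b, u.2) ∈ T) → Base A C U := by
    intro S T U h1 h2 hu s hs t ht
    obtain ⟨b, hb1, hb2⟩ := hu s hs
    obtain ⟨c, hc1, hc2⟩ := hu t ht
    obtain ⟨a1, a2, a3⟩ := h1 _ hb1 _ hc1
    obtain ⟨b1, b2, b3⟩ := h2 _ hb2 _ hc2
    exact ⟨a1.trans b1, a2.trans b2, a3.trans b3⟩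
  induction k with
  | zero => intro S T U; exact hb
  | succ k ih =>
    rintro S T U ⟨h0, h1, h2⟩ ⟨g0, g1, g2⟩ hu
    refine ⟨hb h0 g0 hu, fun x => ?_, fun z => ?_⟩
    · obtain ⟨y, hy⟩ := h1 x
      obtain ⟨z, hz⟩ := g1 y
      refine ⟨z, ih hy hz ?_⟩
      rintro u (rfl | h)
      · exact ⟨y, Or.inl rfl, Or.inl rfl⟩
      · obtain ⟨b, hb1, hb2⟩ := hu u h
        exact ⟨b, Or.inr hb1, Or.inr hb2⟩
    · obtain ⟨y, hy⟩ := g2 z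
      obtain ⟨x, hx⟩ := h2 y
      refine ⟨x, ih hx hy ?_⟩
      rintro u (rfl | h)
      · exact ⟨y, Or.inl rfl, Or.inl rfl⟩
      · obtain ⟨b, hb1, hb2⟩ := hu u h
        exact ⟨b, Or.inr hb1, Or.inr hb2⟩

/-- Isomorphism of ordered graphs. -/
structure Iso (A B : OG) where
  e : A.V ≃ B.V
  le : ∀ x y, A.le x y ↔ B.le (e x) (e y)
  adj : ∀ x y, A.adj x y ↔ B.adj (e x) (e y)

theorem Iso.ef {A B : OG} (f : Iso A B) (k : ℕ) : ∀ (S : Set (A.V × B.V)),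
    (∀ s ∈ S, s.2 = f.e s.1) → EF A B k S := by
  have hb : ∀ (S : Set (A.V × B.V)), (∀ s ∈ S, s.2 = f.e s.1) → Base A B S := by
    intro S h s hs t ht
    rw [h s hs, h t ht]
    exact ⟨f.e.injective.eq_iff.symm, f.le _ _, f.adj _ _⟩
  induction k with
  | zero => exact hb
  | succ k ih =>
    intro S h
    refine ⟨hb S h, fun x => ⟨f.e x, ih _ ?_⟩, fun y => ⟨f.e.symm y, ih _ ?_⟩⟩
    · rintro s (rfl | hs)
      · rfl
      · exact h s hs
    · rintro s (rfl | hs)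
      · simp
      · exact h s hs

def Iso.refl (A : OG) : Iso A A := ⟨Equiv.refl _, fun _ _ => Iff.rfl, fun _ _ => Iff.rfl⟩

def Iso.symm {A B : OG} (f : Iso A B) : Iso B A :=
  ⟨f.e.symm, fun x y => by simp [f.le], fun x y => by simp [f.adj]⟩

def Iso.trans {A B C : OG} (f : Iso A B) (g : Iso B C) : Iso A C :=
  ⟨f.e.trans g.e, fun x y => by simp [f.le, g.le], fun x y => by simp [f.adj, g.adj]⟩

/-- Ordered sum. -/
def OG.sum (A B : OG) : OG where
  V := A.V ⊕ B.V
  le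
    | .inl a, .inl b => A.le a b
    | .inl _, .inr _ => True
    | .inr _, .inl _ => False
    | .inr a, .inr b => B.le a b
  adj
    | .inl a, .inl b => A.adj a b
    | .inl _, .inr _ => False
    | .inr _, .inl _ => False
    | .inr a, .inr b => B.adj a b

/-- The empty ordered graph. -/
def OG.empty : OG := ⟨Empty, fun _ _ => True, fun _ _ => True⟩

def sumAssoc (A B C : OG) : Iso ((A.sum B).sum C) (A.sum (B.sum C)) where
  e := Equiv.sumAssoc A.V B.V C.V
  le := by rintro ((x | x) | x) ((y | y) | y) <;> exact Iff.rfl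
  adj := by rintro ((x | x) | x) ((y | y) | y) <;> exact Iff.rfl

def emptySum (A : OG) : Iso A (OG.empty.sum A) where
  e := (Equiv.emptySum Empty A.V).symm
  le := by intro x y; exact Iff.rfl
  adj := by intro x y; exact Iff.rfl

def sumEmpty (A : OG) : Iso A (A.sum OG.empty) where
  e := (Equiv.sumEmpty A.V Empty).symm
  le := by intro x y; exact Iff.rfl
  adj := by intro x y; exact Iff.rfl

def sumCongr {A A' B B' : OG} (f : Iso A A') (g : Iso B B') : Iso (A.sum B) (A'.sum B') where
  e := Equiv.sumCongr f.e g.e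
  le := by
    rintro (x | x) (y | y)
    · exact f.le x y
    · exact Iff.rfl
    · exact Iff.rfl
    · exact g.le x y
  adj := by
    rintro (x | x) (y | y)
    · exact f.adj x y
    · exact Iff.rfl
    · exact Iff.rfl
    · exact g.adj x y

theorem EF.sum {A A' B B' : OG} {k : ℕ} : ∀ {S : Set (A.V × A'.V)} {T : Set (B.V × B'.V)}
    {U : Set ((A.sum B).V × (A'.sum B').V)}, EF A A' k S → EF B B' k T →
    (∀ u ∈ U, (∃ s ∈ S, u = (Sum.inl s.1, Sum.inl s.2)) ∨
      (∃ t ∈ T, u = (Sum.inr t.1, Sum.inr t.2))) → EF (A.sum B) (A'.sum B') k U := by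
  have hb : ∀ {S : Set (A.V × A'.V)} {T : Set (B.V × B'.V)}
    {U : Set ((A.sum B).V × (A'.sum B').V)}, Base A A' S → Base B B' T →
    (∀ u ∈ U, (∃ s ∈ S, u = (Sum.inl s.1, Sum.inl s.2)) ∨
      (∃ t ∈ T, u = (Sum.inr t.1, Sum.inr t.2))) → Base (A.sum B) (A'.sum B') U := by
    intro S T U h1 h2 hu s hs t ht
    obtain (⟨s', hs', rfl⟩ | ⟨s', hs', rfl⟩) := hu s hs <;>
    obtain (⟨t', ht', rfl⟩ | ⟨t', ht', rfl⟩) := hu t ht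
    · obtain ⟨a1, a2, a3⟩ := h1 _ hs' _ ht'
      exact ⟨Sum.inl_injective.eq_iff.trans (a1.trans Sum.inl_injective.eq_iff.symm), a2, a3⟩
    · refine ⟨⟨fun h => ?_, fun h => ?_⟩, Iff.rfl, Iff.rfl⟩ <;> cases h
    · refine ⟨⟨fun h => ?_, fun h => ?_⟩, Iff.rfl, Iff.rfl⟩ <;> cases h
    · obtain ⟨a1, a2, a3⟩ := h2 _ hs' _ ht'
      exact ⟨Sum.inr_injective.eq_iff.trans (a1.trans Sum.inr_injective.eq_iff.symm), a2, a3⟩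
  induction k with
  | zero => intro S T U; exact hb
  | succ k ih =>
    rintro S T U h g hu
    have key1 : ∀ x y, EF A A' k (insert (x, y) S) → EF B B' k T →
        EF (A.sum B) (A'.sum B') k (insert (Sum.inl x, Sum.inl y) U) := by
      intro x y h1 h2
      refine ih h1 h2 ?_
      rintro u (rfl | h)
      · exact Or.inl ⟨(x, y), Or.inl rfl, rfl⟩
      · obtain (⟨s, hs, e⟩ | h) := hu u h
        · exact Or.inl ⟨s, Or.inr hs, e⟩
        · exact Or.inr h
    have key2 : ∀ x y, EF A A' k S → EF B B' k (insert (x, y) T) →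
        EF (A.sum B) (A'.sum B') k (insert (Sum.inr x, Sum.inr y) U) := by
      intro x y h1 h2
      refine ih h1 h2 ?_
      rintro u (rfl | h)
      · exact Or.inr ⟨(x, y), Or.inl rfl, rfl⟩
      · obtain (h | ⟨s, hs, e⟩) := hu u h
        · exact Or.inl h
        · exact Or.inr ⟨s, Or.inr hs, e⟩
    refine ⟨hb h.base g.base hu, ?_, ?_⟩
    · rintro (x | x)
      · obtain ⟨y, hy⟩ := h.2.1 x
        exact ⟨Sum.inl y, key1 x y hy g.pred⟩
      · obtain ⟨y, hy⟩ := g.2.1 x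
        exact ⟨Sum.inr y, key2 x y h.pred hy⟩
    · rintro (y | y)
      · obtain ⟨x, hx⟩ := h.2.2 y
        exact ⟨Sum.inl x, key1 x y hx g.pred⟩
      · obtain ⟨x, hx⟩ := g.2.2 y
        exact ⟨Sum.inr x, key2 x y h.pred hx⟩

/-! ### Powers -/

/-- Ordered sum of `n` copies of `X`. -/
def pw (X : OG) : ℕ → OG
  | 0 => OG.empty
  | n + 1 => X.sum (pw X n)

/-- Middle decomposition of a power. -/
def pwMid (X : OG) (i j : ℕ) : OG := (pw X i).sum (X.sum (pw X j))

def pwIso (X : OG) : ∀ i j : ℕ, Iso (pw X (i + j + 1)) (pwMid X i j)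
  | 0, j => by
    rw [Nat.zero_add]
    exact emptySum _
  | i + 1, j => by
    have h := (sumCongr (Iso.refl X) (pwIso X i j)).trans
      (sumAssoc X (pw X i) (X.sum (pw X j))).symm
    have e : i + 1 + j + 1 = (i + j + 1) + 1 := by omega
    rw [e]
    exact h

theorem pw_decomp (X : OG) (N : ℕ) : ∀ x : (pw X N).V, ∃ i j : ℕ, i + j + 1 = N ∧
    ∃ f : Iso (pw X N) (pwMid X i j), ∃ x0 : X.V, f.e x = Sum.inr (Sum.inl x0) := by
  induction N with
  | zero => intro x; exact Empty.elim x
  | succ N ih =>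
    rintro (x | x)
    · exact ⟨0, N, by omega, emptySum _, x, rfl⟩
    · obtain ⟨i, j, hij, f, x0, hx⟩ := ih x
      refine ⟨i + 1, j, by omega, (sumCongr (Iso.refl X) f).trans
        (sumAssoc X (pw X i) (X.sum (pw X j))).symm, x0, ?_⟩
      change (Equiv.sumAssoc X.V (pw X i).V (X.V ⊕ (pw X j).V)).symm (Sum.inr (f.e x)) = _
      rw [hx]
      rfl

theorem pw_aper (X : OG) (k : ℕ) : ∀ N M : ℕ, (N = M ∨ (2 ^ k - 1 ≤ N ∧ 2 ^ k - 1 ≤ M)) →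
    EF (pw X N) (pw X M) k ∅ := by
  induction k with
  | zero => intro N M _ s hs; exact hs.elim
  | succ k ih =>
    rintro N M (rfl | ⟨hN, hM⟩)
    · exact (Iso.refl _).ef _ _ (fun s hs => hs.elim)
    have forth : ∀ N M : ℕ, 2 ^ (k + 1) - 1 ≤ N → 2 ^ (k + 1) - 1 ≤ M → ∀ x, ∃ y,
        EF (pw X N) (pw X M) k (insert (x, y) ∅) := by
      intro N M hN hM x
      obtain ⟨i, j, hij, f, x0, hx⟩ := pw_decomp X N x
      have hpos : 1 ≤ 2 ^ k := Nat.one_le_two_pow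
      rw [pow_succ] at hN hM
      obtain ⟨i', j', hij', hi, hj⟩ : ∃ i' j', i' + j' + 1 = M ∧
          (i = i' ∨ (2 ^ k - 1 ≤ i ∧ 2 ^ k - 1 ≤ i')) ∧
          (j = j' ∨ (2 ^ k - 1 ≤ j ∧ 2 ^ k - 1 ≤ j')) := by
        by_cases h1 : i < 2 ^ k - 1
        · exact ⟨i, M - 1 - i, by omega, Or.inl rfl, Or.inr (by omega)⟩
        · by_cases h2 : j < 2 ^ k - 1
          · exact ⟨M - 1 - j, j, by omega, Or.inr (by omega), Or.inl rfl⟩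
          · exact ⟨2 ^ k - 1, M - 1 - (2 ^ k - 1), by omega, Or.inr (by omega),
              Or.inr (by omega)⟩
      subst hij'
      let g := pwIso X i' j'
      refine ⟨g.e.symm (Sum.inr (Sum.inl x0)), ?_⟩
      have e1 : EF X X k {(x0, x0)} := (Iso.refl X).ef _ _ (by rintro s rfl; rfl)
      have e2 : EF (X.sum (pw X j)) (X.sum (pw X j')) k {(Sum.inl x0, Sum.inl x0)} := by
        refine EF.sum e1 (ih j j' hj) ?_
        rintro u rfl
        exact Or.inl ⟨(x0, x0), rfl, rfl⟩
      have e3 : EF (pwMid X i j) (pwMid X i' j') k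
          {(Sum.inr (Sum.inl x0), Sum.inr (Sum.inl x0))} := by
        refine EF.sum (ih i i' hi) e2 ?_
        rintro u rfl
        exact Or.inr ⟨(Sum.inl x0, Sum.inl x0), rfl, rfl⟩
      have e4 : EF (pw X N) (pwMid X i j) k {(x, Sum.inr (Sum.inl x0))} :=
        f.ef _ _ (by rintro s rfl; exact hx.symm)
      have e5 : EF (pwMid X i' j') (pw X (i' + j' + 1)) k
          {(Sum.inr (Sum.inl x0), g.e.symm (Sum.inr (Sum.inl x0)))} :=
        g.symm.ef _ _ (by rintro s rfl; rfl)
      have e6 : EF (pw X N) (pwMid X i' j') k {(x, Sum.inr (Sum.inl x0))} := by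
        refine e4.trans e3 ?_
        rintro u rfl
        exact ⟨_, rfl, rfl⟩
      refine e6.trans e5 ?_
      rintro u (rfl | h)
      · exact ⟨_, rfl, rfl⟩
      · exact h.elim
    refine ⟨fun s hs => hs.elim, forth N M hN hM, fun y => ?_⟩
    obtain ⟨x, hx⟩ := forth M N hM hN y
    refine ⟨x, hx.symm ?_⟩
    rintro u (rfl | h)
    · exact Or.inl rfl
    · exact h.elim

/-! ### Finiteness of the number of types -/

/-- Types of rank `k` of `n`-tuples. -/
def Ty : ℕ → ℕ → Type
  | 0, n => Fin n → Fin n → Prop × Prop × Prop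
  | k + 1, n => (Fin n → Fin n → Prop × Prop × Prop) × Set (Ty k (n + 1))

theorem Ty.finite (k : ℕ) : ∀ n, Finite (Ty k n) := by
  induction k with
  | zero => intro n; unfold Ty; infer_instance
  | succ k ih => intro n; unfold Ty; have := ih (n + 1); infer_instance

/-- Atomic diagram of a tuple. -/
def diag (A : OG) {n : ℕ} (a : Fin n → A.V) : Fin n → Fin n → Prop × Prop × Prop :=
  fun i j => (a i = a j, A.le (a i) (a j), A.adj (a i) (a j))

/-- The type of a tuple. -/
def tp (A : OG) : (k n : ℕ) → (Fin n → A.V) → Ty k n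
  | 0, _, a => diag A a
  | k + 1, n, a => (diag A a, {t | ∃ x : A.V, tp A k (n + 1) (Fin.snoc a x) = t})

theorem base_of_diag {A B : OG} {n : ℕ} (a : Fin n → A.V) (b : Fin n → B.V)
    (h : diag A a = diag B b) : Base A B (Set.range fun i => (a i, b i)) := by
  rintro _ ⟨i, rfl⟩ _ ⟨j, rfl⟩
  have := congrFun (congrFun h i) j
  simp only [diag, Prod.mk.injEq] at this
  exact ⟨this.1.to_iff, this.2.1.to_iff, this.2.2.to_iff⟩

theorem insert_range_subset {A B : OG} {n : ℕ} (a : Fin n → A.V) (b : Fin n → B.V) (x : A.V)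
    (y : B.V) : insert (x, y) (Set.range fun i => (a i, b i)) ⊆
      Set.range fun i => ((Fin.snoc a x : Fin (n + 1) → A.V) i,
        (Fin.snoc b y : Fin (n + 1) → B.V) i) := by
  rintro _ (rfl | ⟨i, rfl⟩)
  · exact ⟨Fin.last n, by simp⟩
  · exact ⟨i.castSucc, by simp⟩

theorem EF_of_tp {A B : OG} (k : ℕ) : ∀ n (a : Fin n → A.V) (b : Fin n → B.V),
    tp A k n a = tp B k n b → EF A B k (Set.range fun i => (a i, b i)) := by
  induction k with
  | zero => intro n a b h; exact base_of_diag a b h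
  | succ k ih =>
    intro n a b h
    have h1 : diag A a = diag B b := congrArg Prod.fst h
    have h2 : {t | ∃ x : A.V, tp A k (n + 1) (Fin.snoc a x) = t} =
      {t | ∃ x : B.V, tp B k (n + 1) (Fin.snoc b x) = t} := congrArg Prod.snd h
    refine ⟨base_of_diag a b h1, fun x => ?_, fun y => ?_⟩
    · have : tp A k (n + 1) (Fin.snoc a x) ∈ {t | ∃ x : A.V, tp A k (n + 1) (Fin.snoc a x) = t} :=
        ⟨x, rfl⟩
      rw [h2] at this
      obtain ⟨y, hy⟩ := this
      exact ⟨y, (ih _ _ _ hy.symm).anti (insert_range_subset a b x y)⟩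
    · have : tp B k (n + 1) (Fin.snoc b y) ∈ {t | ∃ x : B.V, tp B k (n + 1) (Fin.snoc b x) = t} :=
        ⟨y, rfl⟩
      rw [← h2] at this
      obtain ⟨x, hx⟩ := this
      exact ⟨x, (ih _ _ _ hx).anti (insert_range_subset a b x y)⟩

/-! ### The monoid of types -/

/-- Equivalence up to rank `k`. -/
def efSetoid (k : ℕ) : Setoid OG where
  r A B := EF A B k ∅
  iseqv := ⟨fun A => (Iso.refl A).ef _ _ (fun _ h => h.elim),
    fun h => h.symm (fun _ h => h.elim), fun h g => h.trans g (fun _ h => h.elim)⟩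

/-- The monoid of rank `k` types. -/
def TM (k : ℕ) : Type 1 := Quotient (efSetoid k)

/-- The class of an ordered graph. -/
def cls (k : ℕ) (A : OG) : TM k := Quotient.mk (efSetoid k) A

theorem cls_eq {k : ℕ} {A B : OG} : cls k A = cls k B ↔ EF A B k ∅ :=
  Quotient.eq (r := efSetoid k)

theorem Iso.cls_eq {A B : OG} (f : Iso A B) (k : ℕ) : cls k A = cls k B :=
  RandomGraph.cls_eq.2 (f.ef _ _ (fun _ h => h.elim))

instance (k : ℕ) : Finite (TM k) := by
  have := Ty.finite k 0
  refine Finite.of_injective (β := Ty k 0)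
    (fun q => tp (Quotient.out (s := efSetoid k) q) k 0 Fin.elim0) ?_
  intro q r h
  have h2 := (EF_of_tp k _ _ _ h).anti (Set.empty_subset _)
  have h3 := cls_eq.2 h2
  exact (Quotient.out_eq (s := efSetoid k) q).symm.trans
    (h3.trans (Quotient.out_eq (s := efSetoid k) r))

instance (k : ℕ) : Monoid (TM k) where
  mul := Quotient.map₂ OG.sum (by
    intro A A' h B B' g
    exact EF.sum h g (fun _ h => h.elim))
  one := cls k OG.empty
  mul_assoc := by
    rintro ⟨A⟩ ⟨B⟩ ⟨C⟩
    exact (sumAssoc A B C).cls_eq k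
  one_mul := by
    rintro ⟨A⟩
    exact (emptySum A).symm.cls_eq k
  mul_one := by
    rintro ⟨A⟩
    exact (sumEmpty A).symm.cls_eq k

theorem cls_sum (k : ℕ) (A B : OG) : cls k (A.sum B) = cls k A * cls k B := rfl

theorem cls_pw (k : ℕ) (A : OG) (n : ℕ) : cls k (pw A n) = cls k A ^ n := by
  induction n with
  | zero => rw [pow_zero]; rfl
  | succ n ih => rw [pow_succ', ← ih]; rfl

theorem TM.aper {k : ℕ} (x : TM k) : x ^ (2 ^ k) = x ^ (2 ^ k + 1) := by
  obtain ⟨A⟩ := x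
  change cls k A ^ _ = cls k A ^ _
  rw [← cls_pw, ← cls_pw, cls_eq]
  exact pw_aper A k _ _ (Or.inr ⟨Nat.sub_le _ _, (Nat.sub_le _ _).trans (Nat.le_succ _)⟩)

theorem exists_zero_like {M : Type*} [Monoid M] [Finite M] (N : ℕ)
    (hN : ∀ x : M, x ^ N = x ^ (N + 1)) : ∃ u : M, ∀ x, u * x * u = u := by
  have key : ∀ a u y : M, u = a * u * y → u = u * y ∧ u = a * u := by
    intro a u y h
    have h1 : ∀ n : ℕ, u = a ^ n * u * y ^ n := by
      intro n
      induction n with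
      | zero => simp
      | succ n ih =>
        conv_lhs => rw [ih, h]
        rw [pow_succ a, pow_succ' y]
        simp only [mul_assoc]
    constructor
    · conv_lhs => rw [h1 N, hN y]
      conv_rhs => rw [h1 N]
      rw [pow_succ y]
      simp only [mul_assoc]
    · conv_lhs => rw [h1 N, hN a]
      conv_rhs => rw [h1 N]
      rw [pow_succ' a]
      simp only [mul_assoc]
  let I : M → Set M := fun u => {z | ∃ a b, z = a * u * b}
  obtain ⟨u, hu⟩ : ∃ u, ∀ v, (I u).ncard ≤ (I v).ncard :=
    ⟨_, fun v => Function.argmin_le (fun u : M => (I u).ncard) v⟩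
  refine ⟨u, fun x => ?_⟩
  have hsub : I (u * x * u) ⊆ I u := by
    rintro z ⟨a, b, rfl⟩
    exact ⟨a, x * u * b, by simp only [mul_assoc]⟩
  have heq := Set.eq_of_subset_of_ncard_le hsub (hu _) (Set.toFinite _)
  have hmem : u ∈ I u := ⟨1, 1, by simp⟩
  rw [← heq] at hmem
  obtain ⟨a, b, hab⟩ := hmem
  have h1 := (key (a * u * x) u b (by rw [mul_assoc a u x, mul_assoc a]; exact hab)).2
  have h2 := (key a u (x * u) (by rw [← mul_assoc]; exact h1)).1
  rw [mul_assoc, ← h2]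

/-! ### First-order sentences -/

/-- The first-order structure of an ordered graph. -/
def OG.str (A : OG) : Lle.Structure A.V where
  funMap := fun f _ => Empty.elim f
  RelMap
    | .adj => fun x => A.adj (x 0) (x 1)
    | .le => fun x => A.le (x 0) (x 1)

/-- Quantifier depth. -/
def qd : {n : ℕ} → Lle.BoundedFormula Empty n → ℕ
  | _, .falsum => 0
  | _, .equal _ _ => 0
  | _, .rel _ _ => 0
  | _, .imp φ ψ => max (qd φ) (qd ψ)
  | _, .all φ => qd φ + 1

theorem term_mem {A B : OG} {n : ℕ} {S : Set (A.V × B.V)} {v : Fin n → A.V} {w : Fin n → B.V}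
    (h : ∀ i, (v i, w i) ∈ S) (e : Empty → A.V) (e' : Empty → B.V) (t : Lle.Term (Empty ⊕ Fin n)) :
    (@Language.Term.realize _ _ A.str _ (Sum.elim e v) t,
      @Language.Term.realize _ _ B.str _ (Sum.elim e' w) t) ∈ S := by
  cases t with
  | var x =>
    rcases x with x | x
    · exact x.elim
    · exact h x
  | func f _ => exact Empty.elim f

theorem realize_iff {A B : OG} {n : ℕ} (φ : Lle.BoundedFormula Empty n) :
    ∀ {k : ℕ} {S : Set (A.V × B.V)} {v : Fin n → A.V} {w : Fin n → B.V}, EF A B k S →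
    (∀ i, (v i, w i) ∈ S) → qd φ ≤ k → ∀ (e : Empty → A.V) (e' : Empty → B.V),
    (@Language.BoundedFormula.Realize _ _ A.str _ _ φ e v ↔
      @Language.BoundedFormula.Realize _ _ B.str _ _ φ e' w) := by
  induction φ with
  | falsum => intros; exact Iff.rfl
  | equal t1 t2 =>
    intro k S v w h hS _ e e'
    exact (h.base _ (term_mem hS e e' t1) _ (term_mem hS e e' t2)).1
  | rel R ts =>
    intro k S v w h hS _ e e'
    cases R with
    | adj => exact (h.base _ (term_mem hS e e' (ts 0)) _ (term_mem hS e e' (ts 1))).2.2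
    | le => exact (h.base _ (term_mem hS e e' (ts 0)) _ (term_mem hS e e' (ts 1))).2.1
  | imp φ ψ ih1 ih2 =>
    intro k S v w h hS hk e e'
    have hk : max (qd φ) (qd ψ) ≤ k := hk
    exact imp_congr (ih1 h hS (by omega) e e') (ih2 h hS (by omega) e e')
  | all φ ih =>
    intro k S v w h hS hk e e'
    have hk : qd φ + 1 ≤ k := hk
    obtain ⟨k, rfl⟩ : ∃ j, k = j + 1 := ⟨k - 1, by omega⟩
    have key : ∀ x y, EF A B k (insert (x, y) S) →
        (@Language.BoundedFormula.Realize _ _ A.str _ _ φ e (Fin.snoc v x) ↔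
        @Language.BoundedFormula.Realize _ _ B.str _ _ φ e' (Fin.snoc w y)) := by
      intro x y hxy
      refine ih hxy ?_ (by omega) e e'
      intro i
      refine Fin.lastCases ?_ (fun i => ?_) i
      · simp
      · simpa using Or.inr (hS i)
    constructor
    · intro H y
      obtain ⟨x, hx⟩ := h.2.2 y
      exact (key x y hx).1 (H x)
    · intro H x
      obtain ⟨y, hy⟩ := h.2.1 x
      exact (key x y hy).2 (H y)

/-- Truth of a sentence in an ordered graph. -/
def OG.Sat (A : OG) (ψ : Lle.Sentence) : Prop := @Language.Sentence.Realize _ _ A.str ψ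

theorem sat_iff {A B : OG} {k : ℕ} (h : cls k A = cls k B) (ψ : Lle.Sentence) (hk : qd ψ ≤ k) :
    A.Sat ψ ↔ B.Sat ψ :=
  realize_iff ψ (cls_eq.1 h) (fun i => i.elim0) hk _ _

/-! ### Graphs on initial segments of the integers -/

/-- The ordered graph on `Fin n` whose edges `a < b` are given by `h`. -/
def gr (n : ℕ) (h : ℕ → ℕ → Bool) : OG where
  V := Fin n
  le := fun x y => x ≤ y
  adj := fun x y => (x < y ∧ h x y = true) ∨ (y < x ∧ h y x = true)

def grSum (n m : ℕ) (h g k : ℕ → ℕ → Bool) (h1 : ∀ a b, a < b → b < n → k a b = h a b)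
    (h2 : ∀ a b, a < b → b < m → k (n + a) (n + b) = g a b)
    (h3 : ∀ a b, a < n → b < m → k a (n + b) = false) :
    Iso ((gr n h).sum (gr m g)) (gr (n + m) k) where
  e := finSumFinEquiv
  le := by
    rintro (⟨x, hx⟩ | ⟨x, hx⟩) (⟨y, hy⟩ | ⟨y, hy⟩)
    · exact Iff.rfl
    · change True ↔ x ≤ n + y
      exact iff_of_true trivial (by omega)
    · change False ↔ n + x ≤ y
      exact iff_of_false id (by omega)
    · change x ≤ y ↔ n + x ≤ n + y
      omega
  adj := by
    rintro (⟨x, hx⟩ | ⟨x, hx⟩) (⟨y, hy⟩ | ⟨y, hy⟩)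
    · change ((x < y ∧ h x y = true) ∨ (y < x ∧ h y x = true)) ↔
        ((x < y ∧ k x y = true) ∨ (y < x ∧ k y x = true))
      refine or_congr (and_congr_right fun H => ?_) (and_congr_right fun H => ?_)
      · rw [h1 _ _ H hy]
      · rw [h1 _ _ H hx]
    · change False ↔ ((x < n + y ∧ k x (n + y) = true) ∨ (n + y < x ∧ k (n + y) x = true))
      refine iff_of_false id ?_
      rintro (⟨_, H⟩ | ⟨H, _⟩)
      · rw [h3 x y hx hy] at H
        cases H
      · omega
    · change False ↔ ((n + x < y ∧ k (n + x) y = true) ∨ (y < n + x ∧ k y (n + x) = true))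
      refine iff_of_false id ?_
      rintro (⟨H, _⟩ | ⟨_, H⟩)
      · omega
      · rw [h3 y x hy hx] at H
        cases H
    · change ((x < y ∧ g x y = true) ∨ (y < x ∧ g y x = true)) ↔
        ((n + x < n + y ∧ k (n + x) (n + y) = true) ∨ (n + y < n + x ∧ k (n + y) (n + x) = true))
      rw [Nat.add_lt_add_iff_left, Nat.add_lt_add_iff_left]
      refine or_congr (and_congr_right fun H => ?_) (and_congr_right fun H => ?_)
      · rw [h2 _ _ H hy]
      · rw [h2 _ _ H hx]

/-- All edges have positive probability. -/
def Good (p : ℕ → ℝ) (n : ℕ) (h : ℕ → ℕ → Bool) : Prop :=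
  ∀ a b, a < b → b < n → h a b = true → 0 < p (b - a)

/-- Types realised with positive probability. -/
def posTM (p : ℕ → ℝ) (k : ℕ) : Submonoid (TM k) where
  carrier := {t | ∃ n h, Good p n h ∧ t = cls k (gr n h)}
  one_mem' := by
    refine ⟨0, fun _ _ => false, fun a b _ _ h => by simp at h, ?_⟩
    refine Iso.cls_eq (A := OG.empty) ⟨⟨fun x => Empty.elim x, fun x => Fin.elim0 x,
      fun x => Empty.elim x, fun x => Fin.elim0 x⟩, fun x => Empty.elim x, fun x => Empty.elim x⟩ k
  mul_mem' := by
    rintro _ _ ⟨n, h, hg, rfl⟩ ⟨m, g, gg, rfl⟩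
    refine ⟨n + m, fun a b => if b < n then h a b else if n ≤ a then g (a - n) (b - n) else false,
      ?_, ?_⟩
    · intro a b hab hb
      by_cases hbn : b < n
      · simpa [hbn] using hg a b hab hbn
      · by_cases han : n ≤ a
        · simp only [hbn, han, if_true, if_false]
          intro H
          have := gg (a - n) (b - n) (by omega) (by omega) H
          rwa [show b - n - (a - n) = b - a by omega] at this
        · simp [hbn, han]
    · rw [← cls_sum]
      refine (grSum n m h g _ ?_ ?_ ?_).cls_eq k
      · intro a b _ hb; simp [hb]
      · intro a b _ hb; simp
      · intro a b ha _
        have : ¬ n ≤ a := by omega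
        simp [this]

theorem exists_word (p : ℕ → ℝ) (k : ℕ) : ∃ m h, Good p m h ∧ ∀ l g, Good p l g →
    cls k (gr m h) * cls k (gr l g) * cls k (gr m h) = cls k (gr m h) := by
  obtain ⟨⟨u, m, h, hg, rfl⟩, hu⟩ := exists_zero_like (M := posTM p k) (2 ^ k)
    (fun x => Subtype.ext (by simpa using TM.aper x.1))
  refine ⟨m, h, hg, fun l g gg => ?_⟩
  have := hu ⟨_, l, g, gg, rfl⟩
  simpa using congrArg Subtype.val this

/-! ### Samples -/

/-- The edge indicator of a sample, as a function on pairs of integers. -/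
def toN {n : ℕ} (ω : Sample n) (a b : ℕ) : Bool :=
  if h : a < b ∧ b < n then ω ⟨(⟨a, h.1.trans h.2⟩, ⟨b, h.2⟩), h.1⟩ else false

theorem toN_edge {n : ℕ} (ω : Sample n) (e : EdgeIdx n) : toN ω e.1.1 e.1.2 = ω e := by
  have h : e.1.1.val < e.1.2.val ∧ e.1.2.val < n := ⟨e.2, e.1.2.2⟩
  rw [toN, dif_pos h]

theorem adj_iff {n : ℕ} (ω : Sample n) (v w : Fin n) : sampleAdj ω v w ↔
    (v < w ∧ toN ω v w = true) ∨ (w < v ∧ toN ω w v = true) := by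
  constructor
  · rintro ⟨e, he, (⟨h1, h2⟩ | ⟨h1, h2⟩)⟩
    · left
      rw [← h1, ← h2, toN_edge, Fin.lt_def, ← h1, ← h2]
      exact ⟨e.2, he⟩
    · right
      rw [← h1, ← h2, toN_edge, Fin.lt_def, ← h1, ← h2]
      exact ⟨e.2, he⟩
  · rintro (⟨h, h'⟩ | ⟨h, h'⟩)
    · refine ⟨⟨(v, w), h⟩, ?_, Or.inl ⟨rfl, rfl⟩⟩
      exact (toN_edge ω ⟨(v, w), h⟩).symm.trans h'
    · refine ⟨⟨(w, v), h⟩, ?_, Or.inr ⟨rfl, rfl⟩⟩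
      exact (toN_edge ω ⟨(w, v), h⟩).symm.trans h'

theorem str_eq {n : ℕ} (ω : Sample n) : leStructure ω = (gr n (toN ω)).str := by
  refine Language.Structure.ext ?_ ?_
  · funext k f
    exact Empty.elim f
  · funext k r x
    cases r with
    | adj => exact propext (adj_iff ω (x 0) (x 1))
    | le => rfl

theorem satLe_iff {n : ℕ} (ω : Sample n) (ψ : Lle.Sentence) :
    SatLe ω ψ ↔ (gr n (toN ω)).Sat ψ := by
  unfold SatLe OG.Sat
  rw [str_eq]
  exact Iff.rfl

/-- The weight of a single edge. -/
noncomputable def ew (p : ℕ → ℝ) (d : ℕ) (b : Bool) : ℝ := if b then p d else 1 - p d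

theorem sampleWeight_eq (p : ℕ → ℝ) {n : ℕ} (ω : Sample n) :
    sampleWeight p ω = ∏ e : EdgeIdx n, ew p (e.1.2.val - e.1.1.val) (ω e) := rfl

theorem good_of_weight (p : ℕ → ℝ) (hp : ∀ i, 0 ≤ p i) {n : ℕ} (ω : Sample n)
    (h : sampleWeight p ω ≠ 0) : Good p n (toN ω) := by
  intro a b hab hb ht
  rw [sampleWeight_eq, Finset.prod_ne_zero_iff] at h
  let e : EdgeIdx n := ⟨(⟨a, hab.trans hb⟩, ⟨b, hb⟩), hab⟩
  have h1 := h e (Finset.mem_univ _)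
  have h2 : ω e = true := (toN_edge ω e).symm.trans ht
  rw [h2] at h1
  exact lt_of_le_of_ne (hp _) (Ne.symm h1)

/-- The probability of a cylinder event. -/
theorem Pr_cyl (p : ℕ → ℝ) {n : ℕ} (F : EdgeIdx n → Prop) [DecidablePred F] (ω0 : Sample n) :
    Pr p n (fun ω => ∀ e, F e → ω e = ω0 e) =
      ∏ e : EdgeIdx n, if F e then ew p (e.1.2.val - e.1.1.val) (ω0 e) else 1 := by
  classical
  let f : EdgeIdx n → Bool → ℝ := fun e b =>
    if F e ∧ b ≠ ω0 e then 0 else ew p (e.1.2.val - e.1.1.val) b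
  have h1 : ∀ e, ∑ b, f e b =
      if F e then ew p (e.1.2.val - e.1.1.val) (ω0 e) else 1 := by
    intro e
    by_cases hF : F e
    · cases h : ω0 e <;> simp [f, hF, h]
    · simp [f, hF, ew]
  have h2 := Fintype.prod_sum f
  rw [← Finset.prod_congr rfl (fun e _ => h1 e), h2, Pr]
  refine Finset.sum_congr (by ext; simp) fun ω _ => ?_
  split_ifs with h
  · rw [sampleWeight_eq]
    refine Finset.prod_congr rfl fun e _ => ?_
    simp only [f]
    rw [if_neg]
    rintro ⟨h3, h4⟩
    exact h4 (h e h3)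
  · push Not at h
    obtain ⟨e, he, hne⟩ := h
    have hz : f e (ω e) = 0 := if_pos ⟨he, hne⟩
    exact (Finset.prod_eq_zero (Finset.mem_univ e) hz).symm

theorem Pr_mono (p : ℕ → ℝ) (hp : ∀ i, 0 ≤ p i ∧ p i < 1) {n : ℕ} (P Q : Sample n → Prop)
    (h : ∀ ω, sampleWeight p ω ≠ 0 → P ω → Q ω) : Pr p n P ≤ Pr p n Q := by
  unfold Pr
  refine Finset.sum_le_sum fun ω _ => ?_
  have h0 : 0 ≤ sampleWeight p ω := by
    refine Finset.prod_nonneg fun e _ => ?_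
    have := hp (e.1.2.val - e.1.1.val)
    split_ifs <;> linarith
  by_cases hw : sampleWeight p ω = 0
  · simp [hw]
  · by_cases hP : P ω
    · rw [if_pos hP, if_pos (h ω hw hP)]
    · rw [if_neg hP]
      split_ifs
      · exact h0
      · exact le_rfl

/-! ### Product estimates -/

theorem prod_rows (n m : ℕ) (κ : ℝ) (h0 : 0 < κ) (h1 : κ ≤ 1) (T : Finset ℕ) (hT : T.card ≤ m)
    (x : ℕ → ℝ) (hx : ∀ a ∈ Finset.range n, a ∈ T → κ ≤ x a)
    (hx' : ∀ a ∈ Finset.range n, a ∉ T → x a = 1) : κ ^ m ≤ ∏ a ∈ Finset.range n, x a := by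
  calc κ ^ m ≤ κ ^ ((Finset.range n).filter (· ∈ T)).card := by
        refine pow_le_pow_of_le_one h0.le h1 (le_trans (Finset.card_le_card ?_) hT)
        intro a ha
        exact (Finset.mem_filter.1 ha).2
    _ = ∏ a ∈ Finset.range n, if a ∈ T then κ else 1 := by
        rw [Finset.prod_ite]; simp
    _ ≤ _ := by
        refine Finset.prod_le_prod (fun a _ => by split_ifs <;> linarith) fun a ha => ?_
        split_ifs with h
        · exact hx a ha h
        · exact (hx' a ha h).ge

/-- Row bound: product over `b > a`. -/
theorem row_up (p : ℕ → ℝ) (c : ℝ) (hc : ∀ n : ℕ, c ≤ ∏ i ∈ Finset.Icc 1 n, (1 - p i))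
    (n a : ℕ) (ha : a < n) :
    c ≤ ∏ b ∈ Finset.range n, if a < b then 1 - p (b - a) else 1 := by
  rw [← Finset.prod_filter]
  refine (hc (n - 1 - a)).trans (le_of_eq ?_)
  refine Finset.prod_bij (fun i _ => a + i) ?_ ?_ ?_ ?_
  · intro i hi; simp at hi ⊢; omega
  · intro i _ j _ h; omega
  · intro b hb; simp at hb; exact ⟨b - a, by simp; omega, by omega⟩
  · intro i hi; congr 2; omega

theorem row_down (p : ℕ → ℝ) (c : ℝ) (hc : ∀ n : ℕ, c ≤ ∏ i ∈ Finset.Icc 1 n, (1 - p i))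
    (n b : ℕ) (hb : b < n) :
    c ≤ ∏ a ∈ Finset.range n, if a < b then 1 - p (b - a) else 1 := by
  rw [← Finset.prod_filter]
  refine (hc b).trans (le_of_eq ?_)
  refine Finset.prod_bij (fun i _ => b - i) ?_ ?_ ?_ ?_
  · intro i hi; simp at hi ⊢; omega
  · intro i hi j hj h; simp at hi hj; omega
  · intro a ha; simp at ha; exact ⟨b - a, by simp; omega, by omega⟩
  · intro i hi; simp at hi; congr 2; omega

/-- Turn a product over edges into a double product. -/
theorem prod_edges (n : ℕ) (f : ℕ → ℕ → ℝ) : ∏ e : EdgeIdx n, f e.1.1 e.1.2 =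
    ∏ a ∈ Finset.range n, ∏ b ∈ Finset.range n, if a < b then f a b else 1 := by
  rw [← Finset.prod_subtype (Finset.univ.filter fun e : Fin n × Fin n => e.1 < e.2)
    (by intro x; simp) (fun e : Fin n × Fin n => f e.1 e.2), Finset.prod_filter,
    Fintype.prod_prod_type, Finset.prod_range]
  refine Finset.prod_congr rfl fun a _ => ?_
  rw [Finset.prod_range]
  rfl

theorem prod_bound (p : ℕ → ℝ) (hp : ∀ i, 0 ≤ p i ∧ p i < 1) (c : ℝ) (hc0 : 0 < c)
    (hc : ∀ n : ℕ, c ≤ ∏ i ∈ Finset.Icc 1 n, (1 - p i)) (δ : ℝ) (hδ0 : 0 < δ) (hδ1 : δ ≤ 1)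
    (m l n : ℕ) (hn : n = m + (l + m)) (q : ℕ → ℕ → ℝ)
    (hq1 : ∀ a b, a < b → b < m → δ ≤ q a b)
    (hq2 : ∀ a b, a < b → b < n → m + l ≤ a → δ ≤ q a b)
    (hq3 : ∀ a b, a < b → m ≤ b → a < m + l → 1 - p (b - a) ≤ q a b) 
    (hq4 : ∀ a b, m ≤ a → b < m + l → q a b = 1) :
    ((c * δ ^ m) ^ m) * ((c * δ ^ m) ^ m) ≤ ∏ e : EdgeIdx n, q e.1.1 e.1.2 := by
  have hc1 : c ≤ 1 := by simpa using hc 0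
  have hδm : δ ^ m ≤ 1 := pow_le_one₀ hδ0.le hδ1
  have hδm0 : 0 < δ ^ m := pow_pos hδ0 m
  have hκ0 : 0 < c * δ ^ m := by positivity
  have hκ1 : c * δ ^ m ≤ 1 := mul_le_one₀ hc1 hδm0.le hδm
  let w : ℕ → ℕ → ℝ := fun a b => if a < b then 1 - p (b - a) else 1
  have hw0 : ∀ a b, 0 < w a b := by
    intro a b; have := (hp (b - a)).2; simp only [w]; split_ifs <;> linarith
  have hw1 : ∀ a b, w a b ≤ 1 := by
    intro a b; have := (hp (b - a)).1; simp only [w]; split_ifs <;> linarith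
  let d1 : ℕ → ℝ := fun b => if b < m then δ else 1
  let d2 : ℕ → ℝ := fun a => if m + l ≤ a then δ else 1
  have hd1 : ∀ b, 0 < d1 b ∧ d1 b ≤ 1 := by
    intro b; simp only [d1]; split_ifs <;> constructor <;> linarith
  have hd2 : ∀ b, 0 < d2 b ∧ d2 b ≤ 1 := by
    intro b; simp only [d2]; split_ifs <;> constructor <;> linarith
  have hD1 : δ ^ m ≤ ∏ b ∈ Finset.range n, d1 b := by
    refine prod_rows n m δ hδ0 hδ1 (Finset.range m) (by simp) d1 ?_ ?_
    · intro a _ h; simp at h; simp [d1, h]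
    · intro a _ h; simp at h; simp [d1, h]
  have hD2 : δ ^ m ≤ ∏ b ∈ Finset.range n, d2 b := by
    refine prod_rows n m δ hδ0 hδ1 (Finset.Ico (m + l) n) (by simp; omega) d2 ?_ ?_
    · intro a _ h; simp at h; simp [d2, h.1]
    · intro a ha h
      simp at h ha
      have : ¬ m + l ≤ a := by omega
      simp [d2, this]
  let r1 : ℕ → ℕ → ℝ := fun a b => if a < m then w a b * d1 b else 1
  let r2 : ℕ → ℕ → ℝ := fun a b => if m + l ≤ b then w a b * d2 a else 1
  have hr1 : ∀ a b, 0 < r1 a b ∧ r1 a b ≤ 1 := by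
    intro a b
    simp only [r1]
    split_ifs
    · exact ⟨mul_pos (hw0 a b) (hd1 b).1, mul_le_one₀ (hw1 a b) (hd1 b).1.le (hd1 b).2⟩
    · norm_num
  have hr2 : ∀ a b, 0 < r2 a b ∧ r2 a b ≤ 1 := by
    intro a b
    simp only [r2]
    split_ifs
    · exact ⟨mul_pos (hw0 a b) (hd2 a).1, mul_le_one₀ (hw1 a b) (hd2 a).1.le (hd2 a).2⟩
    · norm_num
  have hR1 : (c * δ ^ m) ^ m ≤ ∏ a ∈ Finset.range n, ∏ b ∈ Finset.range n, r1 a b := by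
    refine prod_rows n m _ hκ0 hκ1 (Finset.range m) (by simp) _ ?_ ?_
    · intro a ha h
      simp at h ha
      simp only [r1, h, if_true]
      rw [Finset.prod_mul_distrib]
      exact mul_le_mul (row_up p c hc n a ha) hD1 hδm0.le
        (Finset.prod_nonneg fun b _ => (hw0 a b).le)
    · intro a ha h
      simp at h
      simp [r1, h]
  have hR2 : (c * δ ^ m) ^ m ≤ ∏ b ∈ Finset.range n, ∏ a ∈ Finset.range n, r2 a b := by
    refine prod_rows n m _ hκ0 hκ1 (Finset.Ico (m + l) n) (by simp; omega) _ ?_ ?_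
    · intro b hb h
      simp at h hb
      simp only [r2, h.1, if_true]
      rw [Finset.prod_mul_distrib]
      exact mul_le_mul (row_down p c hc n b hb) hD2 hδm0.le
        (Finset.prod_nonneg fun a _ => (hw0 a b).le)
    · intro b hb h
      simp at h hb
      have : ¬ m + l ≤ b := by omega
      simp [r2, this]
  rw [Finset.prod_comm] at hR2
  rw [prod_edges]
  refine (mul_le_mul hR1 hR2 (by positivity) (Finset.prod_nonneg fun a _ =>
    Finset.prod_nonneg fun b _ => (hr1 a b).1.le)).trans ?_
  rw [← Finset.prod_mul_distrib]
  refine Finset.prod_le_prod (fun a _ => mul_nonneg (Finset.prod_nonneg fun b _ => (hr1 a b).1.le)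
    (Finset.prod_nonneg fun b _ => (hr2 a b).1.le)) fun a ha => ?_
  rw [← Finset.prod_mul_distrib]
  refine Finset.prod_le_prod (fun b _ => mul_nonneg (hr1 a b).1.le (hr2 a b).1.le) fun b hb => ?_
  simp only [Finset.mem_range] at ha hb
  have e1 : r1 a b * r2 a b ≤ r1 a b := mul_le_of_le_one_right (hr1 a b).1.le (hr2 a b).2
  have e2 : r1 a b * r2 a b ≤ r2 a b := mul_le_of_le_one_left (hr2 a b).1.le (hr1 a b).2
  have e3 : w a b * d1 b ≤ w a b := mul_le_of_le_one_right (hw0 a b).le (hd1 b).2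
  have e4 : w a b * d1 b ≤ d1 b := mul_le_of_le_one_left (hd1 b).1.le (hw1 a b)
  have e5 : w a b * d2 a ≤ w a b := mul_le_of_le_one_right (hw0 a b).le (hd2 a).2
  have e6 : w a b * d2 a ≤ d2 a := mul_le_of_le_one_left (hd2 a).1.le (hw1 a b)
  by_cases hab : a < b
  swap
  · rw [if_neg hab]
    exact e1.trans (hr1 a b).2
  rw [if_pos hab]
  have ew : w a b = 1 - p (b - a) := by simp [w, hab]
  by_cases hbm : b < m
  · have ham : a < m := by omega
    have : r1 a b = w a b * d1 b := by simp [r1, ham]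
    have h2 : d1 b = δ := by simp [d1, hbm]
    linarith [hq1 a b hab hbm]
  by_cases hal : m + l ≤ a
  · have hbl : m + l ≤ b := by omega
    have : r2 a b = w a b * d2 a := by simp [r2, hbl]
    have h2 : d2 a = δ := by simp [d2, hal]
    linarith [hq2 a b hab hb hal]
  have h3 := hq3 a b hab (by omega) (by omega)
  by_cases ham : a < m
  · have : r1 a b = w a b * d1 b := by simp [r1, ham]
    linarith
  by_cases hbl : m + l ≤ b
  · have : r2 a b = w a b * d2 a := by simp [r2, hbl]
    linarith
  · rw [hq4 a b (by omega) (by omega)]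
    exact e1.trans (hr1 a b).2

theorem exists_lower {ι : Type*} (f : ι → ℝ) (hf : ∀ i, 0 < f i) (s : Finset ι) :
    ∃ δ : ℝ, 0 < δ ∧ δ ≤ 1 ∧ ∀ i ∈ s, δ ≤ f i := by
  classical
  induction s using Finset.induction_on with
  | empty => exact ⟨1, one_pos, le_rfl, by simp⟩
  | insert a s _ ih =>
    obtain ⟨δ, h0, h1, h2⟩ := ih
    refine ⟨min δ (f a), lt_min h0 (hf a), (min_le_left _ _).trans h1, ?_⟩
    intro i hi
    rcases Finset.mem_insert.1 hi with rfl | hi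
    · exact min_le_right _ _
    · exact (min_le_left _ _).trans (h2 i hi)

/-- If `0 ≤ p i < 1` and `∏_{i=1}^∞ (1 - p i) > 0`, then for every finite
family `{ψ α}` of sentences of `L≤` there are a subfamily `A'`, an `ε > 0` and an `N` such
that for all `n > N`, with probability greater than `ε` the graph `G(n, p̄)` satisfies all
sentences of `A'` and the negations of all the remaining ones. -/
theorem statement_9 (p : ℕ → ℝ) (hp : ∀ i, 0 ≤ p i ∧ p i < 1)
    (hprod : ∃ c : ℝ, 0 < c ∧ ∀ n : ℕ, c ≤ ∏ i ∈ Finset.Icc 1 n, (1 - p i))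
    (A : Type) [Fintype A] (ψ : A → Lle.Sentence) :
    ∃ (A' : Set A) (ε : ℝ) (N : ℕ), 0 < ε ∧
      ∀ n : ℕ, N < n →
        ε < Pr p n (fun ω => (∀ α ∈ A', SatLe ω (ψ α)) ∧ (∀ α ∉ A', ¬ SatLe ω (ψ α))) := by
  classical
  obtain ⟨c, hc0, hc⟩ := hprod
  let k : ℕ := Finset.univ.sup fun α => qd (ψ α)
  have hk : ∀ α, qd (ψ α) ≤ k := fun α =>
    Finset.le_sup (f := fun α => qd (ψ α)) (Finset.mem_univ α)
  obtain ⟨m, h, hg, hu⟩ := exists_word p k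
  obtain ⟨δ, hδ0, hδ1, hδ⟩ := exists_lower (ι := EdgeIdx m)
    (fun e => ew p (e.1.2.val - e.1.1.val) (h e.1.1 e.1.2)) (by
      intro e
      have h1 := hg e.1.1 e.1.2 e.2 e.1.2.2
      have h2 := (hp (e.1.2.val - e.1.1.val)).2
      cases hh : h e.1.1 e.1.2
      · simpa [ew] using h2
      · simpa [ew] using h1 hh) Finset.univ
  have hδ' : ∀ a b, a < b → b < m → δ ≤ ew p (b - a) (h a b) := fun a b hab hb =>
    hδ ⟨(⟨a, hab.trans hb⟩, ⟨b, hb⟩), hab⟩ (Finset.mem_univ _)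
  refine ⟨{α | (gr m h).Sat (ψ α)}, ((c * δ ^ m) ^ m) * ((c * δ ^ m) ^ m) / 2, 2 * m,
    by positivity, ?_⟩
  intro n hn
  obtain ⟨l, rfl⟩ : ∃ l, n = m + (l + m) := ⟨n - 2 * m, by omega⟩
  let H0 : ℕ → ℕ → Bool := fun a b =>
    if b < m then h a b else if m + l ≤ a then h (a - (m + l)) (b - (m + l)) else false
  let F : EdgeIdx (m + (l + m)) → Prop := fun e => e.1.1.val < m ∨ m + l ≤ e.1.2.val
  let q : ℕ → ℕ → ℝ := fun a b => if a < m ∨ m + l ≤ b then ew p (b - a) (H0 a b) else 1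
  have hlow := prod_bound p hp c hc0 hc δ hδ0 hδ1 m l _ rfl q ?_ ?_ ?_ ?_
  · have hcyl := Pr_cyl p F (fun e => H0 e.1.1 e.1.2)
    have hpos : 0 < ((c * δ ^ m) ^ m) * ((c * δ ^ m) ^ m) := by positivity
    refine lt_of_lt_of_le (half_lt_self hpos) (hlow.trans ?_)
    refine le_trans (le_of_eq hcyl.symm) ?_
    refine Pr_mono p hp _ _ fun ω hw hF => ?_
    have hgood := good_of_weight p (fun i => (hp i).1) ω hw
    have hF' : ∀ a b, a < b → b < m + (l + m) → (a < m ∨ m + l ≤ b) → toN ω a b = H0 a b := by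
      intro a b hab hb hor
      exact (toN_edge ω ⟨(⟨a, hab.trans hb⟩, ⟨b, hb⟩), hab⟩).trans
        (hF ⟨(⟨a, hab.trans hb⟩, ⟨b, hb⟩), hab⟩ hor)
    have hcls : cls k (gr (m + (l + m)) (toN ω)) = cls k (gr m h) := by
      have i1 := (grSum m (l + m) h (fun a b => toN ω (m + a) (m + b)) (toN ω) (by
        intro a b hab hb
        rw [hF' a b hab (by omega) (by omega)]
        simp [H0, hb]) (fun _ _ _ _ => rfl) (by
        intro a b ha hb
        rw [hF' a (m + b) (by omega) (by omega) (by omega)]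
        have : ¬ m + l ≤ a := by omega
        simp [H0, this])).cls_eq k
      have i2 := (grSum l m (fun a b => toN ω (m + a) (m + b)) h
        (fun a b => toN ω (m + a) (m + b)) (fun _ _ _ _ => rfl) (by
        intro a b hab hb
        rw [hF' _ _ (by omega) (by omega) (by omega)]
        have e1 : ¬ m + (l + b) < m := by omega
        have e2 : m + l ≤ m + (l + a) := by omega
        have e3 : m + (l + a) - (m + l) = a := by omega
        have e4 : m + (l + b) - (m + l) = b := by omega
        simp only [H0, e1, e2, e3, e4, if_true, if_false]) (by
        intro a b ha hb
        rw [hF' _ _ (by omega) (by omega) (by omega)]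
        have e1 : ¬ m + (l + b) < m := by omega
        have e2 : ¬ m + l ≤ m + a := by omega
        simp only [H0, e1, e2, if_false])).cls_eq k
      rw [← i1, cls_sum, ← i2, cls_sum, ← mul_assoc]
      refine hu l _ ?_
      intro a b hab hb ht
      have := hgood (m + a) (m + b) (by omega) (by omega) ht
      rwa [show m + b - (m + a) = b - a by omega] at this
    have hsat : ∀ α, SatLe ω (ψ α) ↔ (gr m h).Sat (ψ α) := fun α =>
      (satLe_iff ω (ψ α)).trans (sat_iff hcls (ψ α) (hk α))
    exact ⟨fun α hα => (hsat α).2 hα, fun α hα hs => hα ((hsat α).1 hs)⟩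
  · intro a b hab hb
    have e1 : a < m := by omega
    simpa only [q, H0, e1, hb, true_or, if_true] using hδ' a b hab hb
  · intro a b hab hb ha
    have e1 : m + l ≤ b := by omega
    have e2 : ¬ b < m := by omega
    simp only [q, H0, e1, e2, ha, or_true, if_true, if_false]
    have := hδ' (a - (m + l)) (b - (m + l)) (by omega) (by omega)
    rwa [show b - (m + l) - (a - (m + l)) = b - a by omega] at this
  · intro a b hab hb ha
    have e1 : ¬ b < m := by omega
    have e2 : ¬ m + l ≤ a := by omega
    have h1 := (hp (b - a)).1
    simp only [q, H0, e1, e2, if_false]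
    split_ifs
    · simp [ew]
    · linarith
  · intro a b ha hb
    have e1 : ¬ (a < m ∨ m + l ≤ b) := by omega
    simp only [q, e1, if_false]

end RandomGraph
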